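/- Fix β ∈ (0,1) and ε ∈ (0,1). For every κ > 0 there exist δ₀ ∈ (0,1) and n₀ ∈ ℤ⁺ such that for all n ≥ n₀, P(S_n^{δ₀,ε,n}/√n ≤ 0) ≤ ε + κ, where S^{δ,ε,n} is the controlled random walk defined in the context. -/

import Mathlib

open MeasureTheory Real Filter Set
open scoped BigOperators ENNReal Classical

noncomputable section

namespace Paper

/-- Standard Gaussian density `φ`. -/
def gpdf (u : ℝ) : ℝ := (Real.sqrt (2 * Real.pi))⁻¹ * Real.exp (-u ^ 2 / 2)

/-- Standard Gaussian CDF `Φ`. -/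
def gcdf (t : ℝ) : ℝ := ∫ u in Set.Iic t, gpdf u

/-- Inverse Gaussian CDF `Φ⁻¹`. -/
def gcdfInv : ℝ → ℝ := Function.invFun gcdf

/-- `α_δ(x) = ((1 - x(1-β)/δ)² - β²)/(1 - β²)`. -/
def alphaDelta (β δ x : ℝ) : ℝ := ((1 - x * ((1 - β) / δ)) ^ 2 - β ^ 2) / (1 - β ^ 2)

/-- The starting point `s(ε)`. -/
def sEps (β ε : ℝ) : ℝ :=
  if ε ≤ β / (1 + β) then -β * gcdfInv (ε * (1 + β) / (2 * β))
  else -gcdfInv ((ε * (1 + β) + (1 - β)) / 2)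

/-- Distribution of the increment of the controlled walk given current state `s`
(`sqn = √n`): `μ₁` when `s ≤ 0`, `μ₀` when `s > δ√n`, and the mixture
`μ_{δ,s/√n} = (1-α_δ(s/√n))μ₀ + α_δ(s/√n)μ₁` when `0 < s ≤ δ√n`. -/
def stepMeasure (μ0 μ1 : Measure ℝ) (β δ sqn s : ℝ) : Measure ℝ :=
  if s ≤ 0 then μ1
  else if δ * sqn < s then μ0
  else ENNReal.ofReal (1 - alphaDelta β δ (s / sqn)) • μ0 +
    ENNReal.ofReal (alphaDelta β δ (s / sqn)) • μ1

/-- The law of `S_k^{δ,ε,n}`: the controlled random walk started at `s(ε)√n`,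
whose increments are, conditionally on the current state, distributed
according to `stepMeasure` (independently of everything else). -/
def walkLaw (μ0 μ1 : Measure ℝ) (β δ ε : ℝ) (n : ℕ) : ℕ → Measure ℝ
  | 0 => Measure.dirac (sEps β ε * Real.sqrt n)
  | k + 1 => (walkLaw μ0 μ1 β δ ε n k).bind
      fun s => (stepMeasure μ0 μ1 β δ (Real.sqrt n) s).map fun z => s + z

open scoped NNReal

/-!
The probability `u t x` (`oscProb β t x` below) that oscillating Brownian motion (variance `1` left
and `β²` right of the origin) started at `x` is nonpositive at time `t` is explicit, and `s(ε)` is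
the point with `u 1 (s(ε)) = ε`. Run backwards in time along the walk, `u` is a supermartingale up
to a small error: the variance of a step differs from that of the limiting diffusion only for
rescaled positions in `(0, δ]`, where `u_xx`, which vanishes at `0`, is `O(δ)`.

Since `u 0` is a discontinuous indicator, the comparison must stop at a small time `η > 0`.
There `u η` is close to `1` on the negative half line except on a layer `-R√η < x ≤ 0`, covered by
`exp (R²/2) η^γ · t^(-γ) exp (-x²/(2t))` with `γ = β²/2`. This function is a supersolution for every
variance in `[β², 1]`, and at time `η + 1` it costs only `O(η^γ)`.
-/

/-! ### Calculus on the line -/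

lemma abs_sub_linearization_le {f f' : ℝ → ℝ} {B x y : ℝ}
    (hf : ∀ z ∈ uIcc x y, HasDerivAt f (f' z) z) (hB : ∀ z ∈ uIcc x y, |f' z - f' x| ≤ B) :
    |f y - f x - f' x * (y - x)| ≤ B * |y - x| := by
  have hderiv : ∀ z ∈ uIcc x y,
      HasDerivWithinAt (fun w => f w - f' x * w) (f' z - f' x) (uIcc x y) z := fun z hz =>
    ((hf z hz).sub (hasDerivAt_const_mul (f' x))).hasDerivWithinAt
  have hmvt : |f y - f' x * y - (f x - f' x * x)| ≤ B * |y - x| :=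
    (convex_uIcc x y).norm_image_sub_le_of_norm_hasDerivWithin_le hderiv hB
      left_mem_uIcc right_mem_uIcc
  convert hmvt using 2
  ring

lemma abs_taylor_two_le {f f' f'' : ℝ → ℝ} {C : ℝ≥0} (hf : ∀ z, HasDerivAt f (f' z) z)
    (hf' : ∀ z, HasDerivAt f' (f'' z) z) (hlip : LipschitzWith C f'') (x y : ℝ) :
    |f (x + y) - f x - f' x * y - f'' x / 2 * y ^ 2| ≤ C * |y| ^ 3 := by
  have hmem : ∀ {z w}, z ∈ uIcc x w → |z - x| ≤ |w - x| := abs_sub_left_of_mem_uIcc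
  have hfirst : ∀ z ∈ uIcc x (x + y),
      |f' z - f'' x * (z - x) - (f' x - f'' x * (x - x))| ≤ C * |y| * |y| := fun z hz => by
    have hz' : |z - x| ≤ |y| := by simpa using hmem hz
    have hlin : |f' z - f' x - f'' x * (z - x)| ≤ C * |z - x| * |z - x| :=
      abs_sub_linearization_le (fun w _ => hf' w) fun w hw =>
        (hlip.dist_le_mul w x).trans (mul_le_mul_of_nonneg_left (hmem hw) C.2)
    calc |f' z - f'' x * (z - x) - (f' x - f'' x * (x - x))|
        = |f' z - f' x - f'' x * (z - x)| := by ring_nf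
      _ ≤ C * |z - x| * |z - x| := hlin
      _ ≤ C * |y| * |y| := by gcongr
  have hderiv : ∀ z, HasDerivAt (fun w => f w - f'' x / 2 * (w - x) ^ 2)
      (f' z - f'' x * (z - x)) z := fun z => by
    refine ((hf z).sub ((((hasDerivAt_id z).sub_const x).pow 2).const_mul _)).congr_deriv ?_
    simp only [id_eq, Nat.cast_ofNat]
    ring
  convert abs_sub_linearization_le (fun z _ => hderiv z) hfirst using 1 <;> ring_nf

lemma hasDerivAt_ite_le {f g f' g' : ℝ → ℝ} {a : ℝ} (hf : ∀ x, HasDerivAt f (f' x) x)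
    (hg : ∀ x, HasDerivAt g (g' x) x) (hfg : f a = g a) (hfg' : f' a = g' a) (x : ℝ) :
    HasDerivAt (fun y => if y ≤ a then f y else g y) (if x ≤ a then f' x else g' x) x := by
  rcases lt_trichotomy x a with hx | rfl | hx
  · rw [if_pos hx.le]
    refine (hf x).congr_of_eventuallyEq ?_
    filter_upwards [Iio_mem_nhds hx] with y hy using if_pos (le_of_lt hy)
  · have hleft : HasDerivWithinAt (fun y => if y ≤ x then f y else g y) (f' x) (Iic x) x :=
      (hf x).hasDerivWithinAt.congr (fun y hy => if_pos hy) (if_pos le_rfl)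
    rw [if_pos le_rfl, ← hasDerivWithinAt_univ, ← Iic_union_Ici (a := x)]
    refine hleft.union ?_
    rw [hfg']
    refine (hg x).hasDerivWithinAt.congr (fun y hy => ?_) ((if_pos le_rfl).trans hfg)
    rcases (mem_Ici.1 hy).eq_or_lt with rfl | hy
    · exact (if_pos le_rfl).trans hfg
    · exact if_neg hy.not_ge
  · rw [if_neg hx.not_ge]
    refine (hg x).congr_of_eventuallyEq ?_
    filter_upwards [Ioi_mem_nhds hx] with y hy using if_neg (not_le.2 hy)

/-- The functions `F i`, `i ∈ A`, are Lipschitz on `s` with a common constant. -/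
def UniformLipschitzOn {ι α : Type*} [PseudoEMetricSpace α] (A : Set ι) (s : Set α)
    (F : ι → α → ℝ) : Prop :=
  ∃ C : ℝ≥0, ∀ i ∈ A, LipschitzOnWith C (F i) s

namespace UniformLipschitzOn

section PseudoEMetric

variable {ι α : Type*} [PseudoEMetricSpace α] {A : Set ι} {s : Set α} {F G : ι → α → ℝ}

lemma add (hF : UniformLipschitzOn A s F) (hG : UniformLipschitzOn A s G) :
    UniformLipschitzOn A s fun i x => F i x + G i x := by
  obtain ⟨C, hC⟩ := hF
  obtain ⟨D, hD⟩ := hG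
  exact ⟨C + D, fun i hi => (hC i hi).add (hD i hi)⟩

lemma const_mul (c : ℝ) (hF : UniformLipschitzOn A s F) :
    UniformLipschitzOn A s fun i x => c * F i x := by
  obtain ⟨C, hC⟩ := hF
  exact ⟨‖c‖₊ * C, fun i hi => (lipschitzWith_smul c).comp_lipschitzOnWith (hC i hi)⟩

lemma ite_index (p : ι → Prop) [DecidablePred p] (hF : UniformLipschitzOn A s F)
    (hG : UniformLipschitzOn A s G) :
    UniformLipschitzOn A s fun i x => if p i then F i x else G i x := by
  obtain ⟨C, hC⟩ := hF
  obtain ⟨D, hD⟩ := hG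
  refine ⟨max C D, fun i hi => ?_⟩
  dsimp only
  split_ifs
  · exact (hC i hi).weaken (le_max_left C D)
  · exact (hD i hi).weaken (le_max_right C D)

end PseudoEMetric

section Real

variable {ι : Type*} {A : Set ι} {s : Set ℝ} {F F' G : ι → ℝ → ℝ}

lemma of_abs_deriv_le {B : ℝ} (hs : Convex ℝ s) (hF : ∀ i ∈ A, ∀ x ∈ s, HasDerivAt (F i) (F' i x) x)
    (hB : ∀ i ∈ A, ∀ x ∈ s, |F' i x| ≤ B) : UniformLipschitzOn A s F := by
  refine ⟨B.toNNReal, fun i hi => hs.lipschitzOnWith_of_nnnorm_hasDerivWithin_le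
    (fun x hx => (hF i hi x hx).hasDerivWithinAt) fun x hx => ?_⟩
  rw [← norm_toNNReal]
  exact Real.toNNReal_le_toNNReal (hB i hi x hx)

lemma ite_le {a : ℝ} (hF : UniformLipschitzOn A univ F) (hG : UniformLipschitzOn A univ G)
    (hFG : ∀ i ∈ A, F i a = G i a) :
    UniformLipschitzOn A univ fun i x => if x ≤ a then F i x else G i x := by
  obtain ⟨C, hC⟩ := hF
  obtain ⟨D, hD⟩ := hG
  refine ⟨C * 1 + D * 1, fun i hi => ?_⟩
  have hglue : (fun x => if x ≤ a then F i x else G i x)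
      = fun x => F i (min x a) + (G i (max x a) - F i a) := by
    funext x
    split_ifs with hx
    · simp [hx, hFG i hi]
    · simp [(not_le.1 hx).le]
  have hG' : LipschitzWith (D * 1) fun x => G i (max x a) - F i a := by
    simpa using ((lipschitzOnWith_univ.1 (hD i hi)).comp (LipschitzWith.id.max_const a)).sub
      (LipschitzWith.const (F i a))
  rw [lipschitzOnWith_univ]
  dsimp only
  rw [hglue]
  exact ((lipschitzOnWith_univ.1 (hC i hi)).comp (LipschitzWith.id.min_const a)).add hG'

end Real

end UniformLipschitzOn

/-- `V t x` is, for times `t ∈ I`, twice differentiable in space and once in time, with space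
derivatives `Vx`, `Vxx` and time derivative `Vt`; moreover `Vxx` is Lipschitz in space and `Vt` in
time, which makes the remainders in Itô's formula for a discrete walk uniform. -/
structure IsTestFunction (I : Set ℝ) (V Vx Vxx Vt : ℝ → ℝ → ℝ) : Prop where
  hasDerivAt_space : ∀ t ∈ I, ∀ x, HasDerivAt (V t) (Vx t x) x
  hasDerivAt_space_two : ∀ t ∈ I, ∀ x, HasDerivAt (Vx t) (Vxx t x) x
  hasDerivAt_time : ∀ t ∈ I, ∀ x, HasDerivAt (fun s => V s x) (Vt t x) t
  lipschitz_space : UniformLipschitzOn I univ Vxx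
  lipschitz_time : UniformLipschitzOn univ I fun x t => Vt t x

namespace IsTestFunction

variable {I : Set ℝ} {V Vx Vxx Vt W Wx Wxx Wt : ℝ → ℝ → ℝ}

lemma continuous (hV : IsTestFunction I V Vx Vxx Vt) {t : ℝ} (ht : t ∈ I) : Continuous (V t) :=
  continuous_iff_continuousAt.2 fun x => (hV.hasDerivAt_space t ht x).continuousAt

lemma add (hV : IsTestFunction I V Vx Vxx Vt) (hW : IsTestFunction I W Wx Wxx Wt) :
    IsTestFunction I (fun t x => V t x + W t x) (fun t x => Vx t x + Wx t x)
      (fun t x => Vxx t x + Wxx t x) (fun t x => Vt t x + Wt t x) where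
  hasDerivAt_space t ht x := (hV.hasDerivAt_space t ht x).add (hW.hasDerivAt_space t ht x)
  hasDerivAt_space_two t ht x :=
    (hV.hasDerivAt_space_two t ht x).add (hW.hasDerivAt_space_two t ht x)
  hasDerivAt_time t ht x := (hV.hasDerivAt_time t ht x).add (hW.hasDerivAt_time t ht x)
  lipschitz_space := hV.lipschitz_space.add hW.lipschitz_space
  lipschitz_time := hV.lipschitz_time.add hW.lipschitz_time

lemma const_mul (c : ℝ) (hV : IsTestFunction I V Vx Vxx Vt) :
    IsTestFunction I (fun t x => c * V t x) (fun t x => c * Vx t x) (fun t x => c * Vxx t x)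
      (fun t x => c * Vt t x) where
  hasDerivAt_space t ht x := (hV.hasDerivAt_space t ht x).const_mul c
  hasDerivAt_space_two t ht x := (hV.hasDerivAt_space_two t ht x).const_mul c
  hasDerivAt_time t ht x := (hV.hasDerivAt_time t ht x).const_mul c
  lipschitz_space := hV.lipschitz_space.const_mul c
  lipschitz_time := hV.lipschitz_time.const_mul c

lemma add_const (hV : IsTestFunction I V Vx Vxx Vt) (c : ℝ) :
    IsTestFunction I (fun t x => V t x + c) Vx Vxx Vt where
  hasDerivAt_space t ht x := (hV.hasDerivAt_space t ht x).add_const c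
  hasDerivAt_space_two := hV.hasDerivAt_space_two
  hasDerivAt_time t ht x := (hV.hasDerivAt_time t ht x).add_const c
  lipschitz_space := hV.lipschitz_space
  lipschitz_time := hV.lipschitz_time

lemma ite_le {a : ℝ} (hV : IsTestFunction I V Vx Vxx Vt) (hW : IsTestFunction I W Wx Wxx Wt)
    (h : ∀ t ∈ I, V t a = W t a) (hx : ∀ t ∈ I, Vx t a = Wx t a)
    (hxx : ∀ t ∈ I, Vxx t a = Wxx t a) :
    IsTestFunction I (fun t x => if x ≤ a then V t x else W t x)
      (fun t x => if x ≤ a then Vx t x else Wx t x)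
      (fun t x => if x ≤ a then Vxx t x else Wxx t x)
      (fun t x => if x ≤ a then Vt t x else Wt t x) where
  hasDerivAt_space t ht :=
    hasDerivAt_ite_le (hV.hasDerivAt_space t ht) (hW.hasDerivAt_space t ht) (h t ht) (hx t ht)
  hasDerivAt_space_two t ht :=
    hasDerivAt_ite_le (hV.hasDerivAt_space_two t ht) (hW.hasDerivAt_space_two t ht) (hx t ht)
      (hxx t ht)
  hasDerivAt_time t ht x := by
    split_ifs
    · exact hV.hasDerivAt_time t ht x
    · exact hW.hasDerivAt_time t ht x
  lipschitz_space := hV.lipschitz_space.ite_le hW.lipschitz_space hxx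
  lipschitz_time := hV.lipschitz_time.ite_index (· ≤ a) hW.lipschitz_time

end IsTestFunction

/-! ### The Gaussian distribution function -/

lemma gpdf_eq_gaussianPDFReal : gpdf = ProbabilityTheory.gaussianPDFReal 0 1 := by
  funext u
  simp [gpdf, ProbabilityTheory.gaussianPDFReal]

lemma gcdf_eq_cdf (t : ℝ) :
    gcdf t = ProbabilityTheory.cdf (ProbabilityTheory.gaussianReal 0 1) t := by
  rw [ProbabilityTheory.cdf_eq_real, measureReal_def,
    ProbabilityTheory.gaussianReal_apply_eq_integral _ one_ne_zero, gcdf, gpdf_eq_gaussianPDFReal,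
    ENNReal.toReal_ofReal]
  exact setIntegral_nonneg measurableSet_Iic
    fun x _ => ProbabilityTheory.gaussianPDFReal_nonneg _ _ _

lemma gpdf_pos (u : ℝ) : 0 < gpdf u := by
  unfold gpdf
  positivity

lemma continuous_gpdf : Continuous gpdf := by
  unfold gpdf
  fun_prop

lemma integrable_gpdf : Integrable gpdf := by
  rw [gpdf_eq_gaussianPDFReal]
  exact ProbabilityTheory.integrable_gaussianPDFReal 0 1

lemma hasDerivAt_gcdf (t : ℝ) : HasDerivAt gcdf (gpdf t) t := by
  have h : gcdf = fun y => (∫ u in Set.Iic 0, gpdf u) + ∫ u in (0 : ℝ)..y, gpdf u := by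
    funext y
    rw [← intervalIntegral.integral_Iic_sub_Iic integrable_gpdf.integrableOn
      integrable_gpdf.integrableOn, gcdf]
    ring
  rw [h]
  exact (intervalIntegral.integral_hasDerivAt_right
    (continuous_gpdf.intervalIntegrable _ _)
    (continuous_gpdf.stronglyMeasurableAtFilter _ _) continuous_gpdf.continuousAt).const_add _

lemma continuous_gcdf : Continuous gcdf :=
  continuous_iff_continuousAt.2 fun t => (hasDerivAt_gcdf t).continuousAt

lemma strictMono_gcdf : StrictMono gcdf :=
  strictMono_of_deriv_pos fun t => by
    rw [(hasDerivAt_gcdf t).deriv]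
    exact gpdf_pos t

lemma tendsto_gcdf_atTop : Tendsto gcdf atTop (nhds 1) := by
  rw [show gcdf = fun t => _ from funext gcdf_eq_cdf]
  exact ProbabilityTheory.tendsto_cdf_atTop _

lemma tendsto_gcdf_atBot : Tendsto gcdf atBot (nhds 0) := by
  rw [show gcdf = fun t => _ from funext gcdf_eq_cdf]
  exact ProbabilityTheory.tendsto_cdf_atBot _

lemma gcdf_nonneg (t : ℝ) : 0 ≤ gcdf t :=
  gcdf_eq_cdf t ▸ ProbabilityTheory.cdf_nonneg _ _

lemma gcdf_neg (t : ℝ) : gcdf (-t) = 1 - gcdf t := by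
  have hreflect : gcdf (-t) = ∫ u in Ioi t, gpdf u := by
    simpa [gcdf, gpdf] using integral_comp_neg_Iic (-t) gpdf
  have htotal : gcdf t + ∫ u in Ioi t, gpdf u = 1 := by
    rw [gcdf, intervalIntegral.integral_Iic_add_Ioi integrable_gpdf.integrableOn
      integrable_gpdf.integrableOn, gpdf_eq_gaussianPDFReal]
    exact ProbabilityTheory.integral_gaussianPDFReal_eq_one 0 one_ne_zero
  linarith

lemma gcdf_zero : gcdf 0 = 1 / 2 := by
  have h := gcdf_neg 0
  rw [neg_zero] at h
  linarith

lemma gcdf_gcdfInv {p : ℝ} (hp : p ∈ Ioo 0 1) : gcdf (gcdfInv p) = p := by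
  obtain ⟨a, ha⟩ := (tendsto_gcdf_atBot.eventually_lt_const hp.1).exists
  obtain ⟨b, hb⟩ := (tendsto_gcdf_atTop.eventually_const_lt hp.2).exists
  exact Function.invFun_eq
    (mem_range_of_exists_le_of_exists_ge continuous_gcdf ⟨a, ha.le⟩ ⟨b, hb.le⟩)

/-! ### Gaussian monomials -/

/-- The function `x ^ j * t ^ (-p) * exp (-x² / (2wt))`. Up to constants, all derivatives of the
Gaussian distribution function of variance `w * t` are of this form. -/
def gaussMonomial (j : ℕ) (p w t x : ℝ) : ℝ := x ^ j * t ^ (-p) * exp (-(x ^ 2 / (2 * w * t)))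

section GaussMonomial

variable {t w : ℝ}

lemma gaussMonomial_nonneg {j : ℕ} (hj : Even j) (ht : 0 ≤ t) (p w x : ℝ) :
    0 ≤ gaussMonomial j p w t x :=
  mul_nonneg (mul_nonneg (hj.pow_nonneg x) (rpow_nonneg ht _)) (exp_pos _).le

lemma gaussMonomial_zero_right {j : ℕ} (hj : j ≠ 0) (p w t : ℝ) : gaussMonomial j p w t 0 = 0 := by
  simp [gaussMonomial, hj]

lemma gaussMonomial_zero_le_one {p : ℝ} (hp : 0 ≤ p) (hw : 0 ≤ w) (ht : 1 ≤ t) (x : ℝ) :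
    gaussMonomial 0 p w t x ≤ 1 := by
  have hexp : exp (-(x ^ 2 / (2 * w * t))) ≤ 1 := exp_le_one_iff.2 (neg_nonpos.2 (by positivity))
  rw [gaussMonomial, pow_zero, one_mul]
  exact mul_le_one₀ (rpow_le_one_of_one_le_of_nonpos ht (neg_nonpos.2 hp)) (exp_pos _).le hexp

lemma gaussMonomial_div (ht : 0 < t) (j : ℕ) (p w x : ℝ) :
    gaussMonomial j p w t x / t = gaussMonomial j (p + 1) w t x := by
  rw [gaussMonomial, gaussMonomial, neg_add', rpow_sub_one ht.ne']
  ring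

lemma hasDerivAt_gaussMonomial_space (ht : 0 < t) (j : ℕ) (p w x : ℝ) :
    HasDerivAt (gaussMonomial j p w t)
      (j * gaussMonomial (j - 1) p w t x - w⁻¹ * gaussMonomial (j + 1) (p + 1) w t x) x := by
  have hexponent : HasDerivAt (fun y : ℝ => -(y ^ 2 / (2 * w * t))) (-(2 * x / (2 * w * t))) x := by
    refine ((hasDerivAt_pow 2 x).div_const (2 * w * t)).neg.congr_deriv ?_
    simp
  refine (((hasDerivAt_pow j x).mul_const _).mul hexponent.exp).congr_deriv ?_
  rw [← gaussMonomial_div ht]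
  simp only [gaussMonomial]
  field_simp
  ring

lemma hasDerivAt_gaussMonomial_time (ht : 0 < t) (j : ℕ) (p w x : ℝ) :
    HasDerivAt (fun s => gaussMonomial j p w s x)
      (-p * gaussMonomial j (p + 1) w t x
        + (2 * w)⁻¹ * gaussMonomial (j + 2) (p + 1 + 1) w t x) t := by
  have hexponent :
      HasDerivAt (fun s : ℝ => -(x ^ 2 / (2 * w * s))) (x ^ 2 / (2 * w) / t ^ 2) t := by
    have heq : (fun s => -(x ^ 2 / (2 * w * s))) = fun s => -(x ^ 2 / (2 * w) * s⁻¹) := by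
      simp only [div_eq_mul_inv, mul_inv, mul_assoc]
    rw [heq]
    refine ((hasDerivAt_inv ht.ne').const_mul (x ^ 2 / (2 * w))).neg.congr_deriv ?_
    ring
  refine (((Real.hasDerivAt_rpow_const (Or.inl ht.ne')).const_mul (x ^ j)).mul
    hexponent.exp).congr_deriv ?_
  rw [← gaussMonomial_div ht, ← gaussMonomial_div ht, ← gaussMonomial_div ht]
  simp only [gaussMonomial, rpow_sub_one ht.ne']
  field_simp
  ring

lemma abs_pow_mul_exp_neg_mul_sq_le {c : ℝ} (hc : 0 < c) (j : ℕ) (x : ℝ) :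
    |x| ^ j * exp (-(c * x ^ 2)) ≤ j.factorial * exp (1 / (4 * c)) := by
  have hpow : |x| ^ j ≤ j.factorial * exp |x| :=
    (div_le_iff₀' (by positivity)).1 (pow_div_factorial_le_exp _ (abs_nonneg x) j)
  have hsq : |x| + -(c * x ^ 2) ≤ 1 / (4 * c) := by
    rw [le_div_iff₀ (by positivity), ← sq_abs]
    nlinarith [sq_nonneg (2 * c * |x| - 1)]
  calc |x| ^ j * exp (-(c * x ^ 2)) ≤ j.factorial * exp |x| * exp (-(c * x ^ 2)) := by gcongr
    _ = j.factorial * exp (|x| + -(c * x ^ 2)) := by rw [exp_add, mul_assoc]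
    _ ≤ j.factorial * exp (1 / (4 * c)) := by gcongr

variable {a : ℝ}

lemma exists_abs_gaussMonomial_le (ha : 0 < a) (hw : 0 < w) (b : ℝ) (j : ℕ) (p : ℝ) :
    ∃ C, ∀ t ∈ Icc a b, ∀ x, |gaussMonomial j p w t x| ≤ C := by
  have hpos : ∀ t ∈ Icc a b, 0 < t := fun t ht => ha.trans_le ht.1
  obtain ⟨D, hD⟩ := isCompact_Icc.exists_bound_of_continuousOn (f := fun t : ℝ => t ^ (-p))
    (continuousOn_id.rpow_const fun t ht => Or.inl (hpos t ht).ne')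
  refine ⟨D * (j.factorial * exp (1 / (4 * (2 * w * b)⁻¹))), fun t ht x => ?_⟩
  have ht0 := hpos t ht
  have hb := ht0.trans_le ht.2
  have hexp : exp (-(x ^ 2 / (2 * w * t))) ≤ exp (-((2 * w * b)⁻¹ * x ^ 2)) := by
    rw [inv_mul_eq_div]
    gcongr
    exact ht.2
  calc |gaussMonomial j p w t x| = |t ^ (-p)| * (|x| ^ j * exp (-(x ^ 2 / (2 * w * t)))) := by
        rw [gaussMonomial, abs_mul, abs_mul, abs_pow, abs_exp]
        ring
    _ ≤ D * (|x| ^ j * exp (-((2 * w * b)⁻¹ * x ^ 2))) := by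
        gcongr
        · exact (abs_nonneg _).trans (hD t ht)
        · exact hD t ht
    _ ≤ _ := mul_le_mul_of_nonneg_left (abs_pow_mul_exp_neg_mul_sq_le (by positivity) j x)
        ((abs_nonneg _).trans (hD t ht))

lemma uniformLipschitzOn_gaussMonomial_space (ha : 0 < a) (hw : 0 < w) (b : ℝ) (j : ℕ) (p : ℝ) :
    UniformLipschitzOn (Icc a b) univ (gaussMonomial j p w) := by
  obtain ⟨C, hC⟩ := exists_abs_gaussMonomial_le ha hw b (j - 1) p
  obtain ⟨D, hD⟩ := exists_abs_gaussMonomial_le ha hw b (j + 1) (p + 1)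
  refine UniformLipschitzOn.of_abs_deriv_le (B := j * C + w⁻¹ * D) convex_univ
    (fun t ht x _ => hasDerivAt_gaussMonomial_space (ha.trans_le ht.1) j p w x)
    fun t ht x _ => (abs_sub _ _).trans ?_
  rw [abs_mul, abs_mul, Nat.abs_cast, abs_of_pos (inv_pos.2 hw)]
  gcongr
  exacts [hC t ht x, hD t ht x]

lemma uniformLipschitzOn_gaussMonomial_time (ha : 0 < a) (hw : 0 < w) (b : ℝ) (j : ℕ) (p : ℝ) :
    UniformLipschitzOn univ (Icc a b) fun x t => gaussMonomial j p w t x := by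
  obtain ⟨C, hC⟩ := exists_abs_gaussMonomial_le ha hw b j (p + 1)
  obtain ⟨D, hD⟩ := exists_abs_gaussMonomial_le ha hw b (j + 2) (p + 1 + 1)
  refine UniformLipschitzOn.of_abs_deriv_le (B := |p| * C + (2 * w)⁻¹ * D) (convex_Icc a b)
    (fun x _ t ht => hasDerivAt_gaussMonomial_time (ha.trans_le ht.1) j p w x)
    fun x _ t ht => (abs_add_le _ _).trans ?_
  rw [abs_mul, abs_mul, abs_neg, abs_of_pos (by positivity : 0 < (2 * w)⁻¹)]
  gcongr
  exacts [hC t ht x, hD t ht x]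

lemma isTestFunction_gaussMonomial_zero (ha : 0 < a) (hw : 0 < w) (b p : ℝ) :
    IsTestFunction (Icc a b) (gaussMonomial 0 p w)
      (fun t x => -w⁻¹ * gaussMonomial 1 (p + 1) w t x)
      (fun t x => -w⁻¹ * gaussMonomial 0 (p + 1) w t x
        + w⁻¹ ^ 2 * gaussMonomial 2 (p + 1 + 1) w t x)
      (fun t x => -p * gaussMonomial 0 (p + 1) w t x
        + (2 * w)⁻¹ * gaussMonomial 2 (p + 1 + 1) w t x) where
  hasDerivAt_space t ht x :=
    (hasDerivAt_gaussMonomial_space (ha.trans_le ht.1) 0 p w x).congr_deriv (by simp)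
  hasDerivAt_space_two t ht x := by
    refine ((hasDerivAt_gaussMonomial_space (ha.trans_le ht.1) 1 (p + 1) w x).const_mul
      (-w⁻¹)).congr_deriv ?_
    simp only [Nat.cast_one, tsub_self, Nat.reduceAdd]
    ring
  hasDerivAt_time t ht x := hasDerivAt_gaussMonomial_time (ha.trans_le ht.1) 0 p w x
  lipschitz_space := ((uniformLipschitzOn_gaussMonomial_space ha hw b 0 (p + 1)).const_mul _).add
    ((uniformLipschitzOn_gaussMonomial_space ha hw b 2 (p + 1 + 1)).const_mul _)
  lipschitz_time := ((uniformLipschitzOn_gaussMonomial_time ha hw b 0 (p + 1)).const_mul _).add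
    ((uniformLipschitzOn_gaussMonomial_time ha hw b 2 (p + 1 + 1)).const_mul _)

end GaussMonomial

/-! ### Oscillating Brownian motion -/

/-- Up to the factor `√w`, the probability that a centred Gaussian variable of variance `w * t` is
at most `-x`; the factor makes the space derivative at `0` independent of `w`. -/
def gaussTail (w t x : ℝ) : ℝ := √w * gcdf (-(x / (√w * √t)))

/-- The space derivative of `gaussTail`. -/
def gaussTailX (w t x : ℝ) : ℝ := -(√(2 * π))⁻¹ * gaussMonomial 0 (1 / 2) w t x

/-- The second space derivative of `gaussTail`. -/
def gaussTailXX (w t x : ℝ) : ℝ := (√(2 * π))⁻¹ / w * gaussMonomial 1 (1 / 2 + 1) w t x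

section GaussTail

variable {w t : ℝ}

lemma gpdf_neg_div_sqrt (hw : 0 < w) (ht : 0 < t) (x : ℝ) :
    gpdf (-(x / (√w * √t))) = -gaussTailX w t x * √t := by
  have hsq : (-(x / (√w * √t))) ^ 2 = x ^ 2 / (w * t) := by
    rw [neg_sq, div_pow, mul_pow, sq_sqrt hw.le, sq_sqrt ht.le]
  rw [gpdf, gaussTailX, gaussMonomial, neg_div, hsq, rpow_neg ht.le, ← sqrt_eq_rpow]
  field_simp

lemma hasDerivAt_gaussTail_space (hw : 0 < w) (ht : 0 < t) (x : ℝ) :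
    HasDerivAt (gaussTail w t) (gaussTailX w t x) x := by
  have hinner : HasDerivAt (fun y => -(y / (√w * √t))) (-(1 / (√w * √t))) x :=
    ((hasDerivAt_id x).div_const _).neg
  refine (((hasDerivAt_gcdf _).comp x hinner).const_mul √w).congr_deriv ?_
  rw [gpdf_neg_div_sqrt hw ht]
  field_simp

lemma hasDerivAt_gaussTailX_space (ht : 0 < t) (w x : ℝ) :
    HasDerivAt (gaussTailX w t) (gaussTailXX w t x) x := by
  refine ((hasDerivAt_gaussMonomial_space ht 0 (1 / 2) w x).const_mul _).congr_deriv ?_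
  simp only [gaussTailXX, Nat.cast_zero, zero_add, zero_mul, zero_sub]
  ring

lemma hasDerivAt_gaussTail_time (hw : 0 < w) (ht : 0 < t) (x : ℝ) :
    HasDerivAt (fun s => gaussTail w s x) (w / 2 * gaussTailXX w t x) t := by
  have hinner : HasDerivAt (fun s => -(x / (√w * √s))) (x / √w / (2 * √t * t)) t := by
    have hsqrt : √t ≠ 0 := (sqrt_pos.2 ht).ne'
    simp only [← div_div, div_eq_mul_inv (x / √w)]
    refine (((hasDerivAt_sqrt ht.ne').inv hsqrt).const_mul (x / √w)).neg.congr_deriv ?_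
    rw [sq_sqrt ht.le]
    ring
  refine (((hasDerivAt_gcdf _).comp t hinner).const_mul √w).congr_deriv ?_
  rw [gpdf_neg_div_sqrt hw ht, gaussTailXX, ← gaussMonomial_div ht, gaussTailX]
  simp only [gaussMonomial]
  field_simp

lemma isTestFunction_gaussTail {a : ℝ} (ha : 0 < a) (hw : 0 < w) (b : ℝ) :
    IsTestFunction (Icc a b) (gaussTail w) (gaussTailX w) (gaussTailXX w)
      (fun t x => w / 2 * gaussTailXX w t x) where
  hasDerivAt_space _ ht := hasDerivAt_gaussTail_space hw (ha.trans_le ht.1)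
  hasDerivAt_space_two _ ht := hasDerivAt_gaussTailX_space (ha.trans_le ht.1) w
  hasDerivAt_time _ ht := hasDerivAt_gaussTail_time hw (ha.trans_le ht.1)
  lipschitz_space := (uniformLipschitzOn_gaussMonomial_space ha hw b 1 (1 / 2 + 1)).const_mul _
  lipschitz_time :=
    ((uniformLipschitzOn_gaussMonomial_time ha hw b 1 (1 / 2 + 1)).const_mul _).const_mul _

end GaussTail

/-- The diffusion coefficient of oscillating Brownian motion, `1` on the negative and `β²` on the
positive half line. -/
def oscVar (β x : ℝ) : ℝ := if x ≤ 0 then 1 else β ^ 2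

/-- The probability that oscillating Brownian motion started at `x` is nonpositive at time `t`. -/
def oscProb (β t x : ℝ) : ℝ :=
  if x ≤ 0 then 2 / (1 + β) * gaussTail 1 t x + -((1 - β) / (1 + β))
  else 2 / (1 + β) * gaussTail (β ^ 2) t x

/-- The space derivative of `oscProb`. -/
def oscProbX (β t x : ℝ) : ℝ := 2 / (1 + β) * gaussTailX (oscVar β x) t x

/-- The second space derivative of `oscProb`. -/
def oscProbXX (β t x : ℝ) : ℝ := 2 / (1 + β) * gaussTailXX (oscVar β x) t x

section OscProb

variable {β : ℝ}

lemma oscProbXX_zero_right (β t : ℝ) : oscProbXX β t 0 = 0 := by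
  rw [oscProbXX, gaussTailXX, gaussMonomial_zero_right one_ne_zero, mul_zero, mul_zero]

lemma gaussTail_glue (hβ : 0 < β) (t : ℝ) :
    2 / (1 + β) * gaussTail 1 t 0 + -((1 - β) / (1 + β))
      = 2 / (1 + β) * gaussTail (β ^ 2) t 0 := by
  simp only [gaussTail, zero_div, neg_zero, gcdf_zero, sqrt_one, sqrt_sq hβ.le]
  field_simp
  ring

lemma isTestFunction_oscProb {a : ℝ} (ha : 0 < a) (hβ : 0 < β) (b : ℝ) :
    IsTestFunction (Icc a b) (oscProb β) (oscProbX β) (oscProbXX β)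
      (fun t x => oscVar β x / 2 * oscProbXX β t x) := by
  have hglue := (((isTestFunction_gaussTail ha one_pos b).const_mul (2 / (1 + β))).add_const
    (-((1 - β) / (1 + β)))).ite_le
      ((isTestFunction_gaussTail ha (sq_pos_of_pos hβ) b).const_mul (2 / (1 + β))) (a := 0)
      (fun t _ => gaussTail_glue hβ t) (fun t _ => by simp [gaussTailX, gaussMonomial])
      (fun t _ => by simp [gaussTailXX, gaussMonomial_zero_right])
  convert hglue using 3 with t x t x t x
  · rfl
  · unfold oscProbX oscVar
    split_ifs <;> rfl
  · unfold oscProbXX oscVar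
    split_ifs <;> rfl
  · unfold oscProbXX oscVar
    split_ifs <;> ring

lemma oscProb_of_nonneg (hβ : 0 < β) {x : ℝ} (hx : 0 ≤ x) (t : ℝ) :
    oscProb β t x = 2 / (1 + β) * gaussTail (β ^ 2) t x := by
  rcases hx.eq_or_lt with rfl | hx
  · rw [oscProb, if_pos le_rfl, gaussTail_glue hβ]
  · rw [oscProb, if_neg hx.not_ge]

lemma oscProb_nonneg (hβ : 0 < β) (t x : ℝ) : 0 ≤ oscProb β t x := by
  rcases le_total x 0 with hx | hx
  · have hhalf : 1 / 2 ≤ gcdf (-(x / (√1 * √t))) := by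
      rw [← gcdf_zero]
      exact strictMono_gcdf.monotone
        (neg_nonneg.2 (div_nonpos_of_nonpos_of_nonneg hx (by positivity)))
    have hvalue : oscProb β t x = (2 * gcdf (-(x / (√1 * √t))) - 1 + β) / (1 + β) := by
      rw [oscProb, if_pos hx, gaussTail, sqrt_one]
      ring
    rw [hvalue]
    exact div_nonneg (by linarith) (by linarith)
  · rw [oscProb_of_nonneg hβ hx, gaussTail]
    have := gcdf_nonneg (-(x / (√(β ^ 2) * √t)))
    positivity

lemma one_sub_le_oscProb (hβ : 0 < β) {x : ℝ} (hx : x ≤ 0) (t : ℝ) :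
    1 - 2 * (1 - gcdf (-(x / √t))) ≤ oscProb β t x := by
  have hle := gcdf_nonneg (x / √t)
  rw [← neg_neg (x / √t), gcdf_neg] at hle
  rw [oscProb, if_pos hx, gaussTail, sqrt_one, one_mul, one_mul]
  field_simp
  nlinarith

lemma oscProb_one_sEps (hβ : β ∈ Ioo (0 : ℝ) 1) {ε : ℝ} (hε : ε ∈ Ioo (0 : ℝ) 1) :
    oscProb β 1 (sEps β ε) = ε := by
  obtain ⟨hβ0, hβ1⟩ := hβ
  obtain ⟨hε0, hε1⟩ := hε
  unfold sEps
  split_ifs with h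
  · rw [le_div_iff₀ (by linarith)] at h
    have hp : ε * (1 + β) / (2 * β) ∈ Ioc 0 (1 / 2) :=
      ⟨by positivity, by rw [div_le_iff₀ (by positivity)]; linarith⟩
    have hQ := gcdf_gcdfInv ⟨hp.1, hp.2.trans_lt one_half_lt_one⟩
    have hQ0 : gcdfInv (ε * (1 + β) / (2 * β)) ≤ 0 := by
      rw [← strictMono_gcdf.le_iff_le, hQ, gcdf_zero]
      exact hp.2
    rw [oscProb_of_nonneg hβ0 (by nlinarith), gaussTail, sqrt_one, sqrt_sq hβ0.le, mul_one,
      neg_mul, neg_div, neg_neg, mul_div_cancel_left₀ _ hβ0.ne', hQ]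
    field_simp
  · rw [not_le, div_lt_iff₀ (by linarith)] at h
    have hp : (ε * (1 + β) + (1 - β)) / 2 ∈ Ioo (1 / 2) 1 := ⟨by linarith, by nlinarith⟩
    have hQ := gcdf_gcdfInv ⟨one_half_pos.trans hp.1, hp.2⟩
    have hQ0 : 0 < gcdfInv ((ε * (1 + β) + (1 - β)) / 2) := by
      rw [← strictMono_gcdf.lt_iff_lt, hQ, gcdf_zero]
      exact hp.1
    rw [oscProb, if_pos (by linarith), gaussTail, sqrt_one, mul_one, div_one, neg_neg, hQ]
    field_simp
    ring

end OscProb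

/-! ### The variance of a step -/

/-- The variance of a step of the controlled walk taken at rescaled position `x`, that is, of
`μ_{δ,x}` for `0 < x ≤ δ`. -/
def stepVar (β δ x : ℝ) : ℝ :=
  if x ≤ 0 then 1 else if δ < x then β ^ 2 else (1 - x * ((1 - β) / δ)) ^ 2

section StepVar

variable {β δ : ℝ}

lemma linear_interpolation_mem_Icc {x : ℝ} (hβ : β ≤ 1) (hδ : 0 < δ) (hx : x ∈ Icc 0 δ) :
    1 - x * ((1 - β) / δ) ∈ Icc β 1 := by
  have hratio : x / δ ∈ Icc 0 1 := ⟨div_nonneg hx.1 hδ.le, (div_le_one hδ).2 hx.2⟩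
  rw [mul_div_left_comm]
  constructor <;> nlinarith [hratio.1, hratio.2]

lemma stepVar_mem_Icc (hβ : β ∈ Ioo (0 : ℝ) 1) (hδ : 0 < δ) (x : ℝ) :
    stepVar β δ x ∈ Icc (β ^ 2) 1 := by
  have hβ2 : β ^ 2 ≤ 1 := pow_le_one₀ hβ.1.le hβ.2.le
  unfold stepVar
  split_ifs with hx hxδ
  · exact ⟨hβ2, le_rfl⟩
  · exact ⟨le_rfl, hβ2⟩
  · have hy := linear_interpolation_mem_Icc hβ.2.le hδ ⟨(not_le.1 hx).le, not_lt.1 hxδ⟩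
    exact ⟨pow_le_pow_left₀ hβ.1.le hy.1 2, pow_le_one₀ (hβ.1.le.trans hy.1) hy.2⟩

lemma oscVar_mem_Icc (hβ : β ∈ Ioo (0 : ℝ) 1) (x : ℝ) : oscVar β x ∈ Icc (β ^ 2) 1 := by
  have hβ2 : β ^ 2 ≤ 1 := pow_le_one₀ hβ.1.le hβ.2.le
  unfold oscVar
  split_ifs
  exacts [⟨hβ2, le_rfl⟩, ⟨le_rfl, hβ2⟩]

lemma stepVar_eq_oscVar {x : ℝ} (hx : x ∉ Ioc 0 δ) : stepVar β δ x = oscVar β x := by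
  unfold stepVar oscVar
  split_ifs with h hδ
  · rfl
  · rfl
  · exact absurd ⟨not_le.1 h, not_lt.1 hδ⟩ hx

lemma exists_stepVar_mul_le {I : Set ℝ} {F : ℝ → ℝ → ℝ} {e : ℝ} (hβ : β ∈ Ioo (0 : ℝ) 1)
    (hF : UniformLipschitzOn I univ F) (hF0 : ∀ t ∈ I, F t 0 = 0) (he : 0 < e) :
    ∃ δ ∈ Ioo (0 : ℝ) 1, ∀ t ∈ I, ∀ x,
      stepVar β δ x / 2 * F t x ≤ oscVar β x / 2 * F t x + e := by
  obtain ⟨C, hC⟩ := hF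
  have hC1 : (0 : ℝ) < C + 1 := by positivity
  obtain ⟨δ, hδ0, hδ⟩ := exists_between (lt_min one_pos (div_pos he hC1))
  refine ⟨δ, ⟨hδ0, hδ.trans_le (min_le_left _ _)⟩, fun t ht x => ?_⟩
  by_cases hx : x ∈ Ioc 0 δ
  · have hsmall : |F t x| ≤ e := by
      have hlip := (hC t ht).dist_le_mul x (mem_univ x) 0 (mem_univ 0)
      rw [Real.dist_eq, Real.dist_eq, hF0 t ht, sub_zero, sub_zero, abs_of_pos hx.1] at hlip
      have hCδ := (lt_div_iff₀ hC1).1 (hδ.trans_le (min_le_right _ _))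
      have hCx : (C : ℝ) * x ≤ C * δ := mul_le_mul_of_nonneg_left hx.2 C.2
      linarith
    have hvar : |(stepVar β δ x - oscVar β x) / 2| ≤ 1 := by
      have hs := stepVar_mem_Icc hβ hδ0 x
      have ho := oscVar_mem_Icc hβ x
      rw [abs_le]
      constructor <;> nlinarith [hs.1, hs.2, ho.1, ho.2]
    have hprod : (stepVar β δ x - oscVar β x) / 2 * F t x ≤ 1 * e := by
      refine (le_abs_self _).trans ?_
      rw [abs_mul]
      gcongr
    linarith
  · rw [stepVar_eq_oscVar hx]
    linarith

end StepVar

/-! ### Centred steps -/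

/-- A centred probability law on `[-K, K]` with variance `v`. -/
structure IsCentredStep (K v : ℝ) (ν : Measure ℝ) : Prop where
  prob : IsProbabilityMeasure ν
  bounded : ∀ᵐ z ∂ν, |z| ≤ K
  mean : ∫ z, z ∂ν = 0
  var : ∫ z, z ^ 2 ∂ν = v

namespace IsCentredStep

variable {K v v₀ v₁ : ℝ} {ν μ₀ μ₁ : Measure ℝ}

lemma integrable_pow (hν : IsCentredStep K v ν) (j : ℕ) : Integrable (fun z => z ^ j) ν := by
  have := hν.prob
  refine Integrable.of_bound (by fun_prop) (K ^ j) ?_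
  filter_upwards [hν.bounded] with z hz
  rw [norm_pow, Real.norm_eq_abs]
  gcongr

lemma integrable_id (hν : IsCentredStep K v ν) : Integrable (fun z => z) ν := by
  simpa using hν.integrable_pow 1

lemma mixture {a : ℝ} (h₀ : IsCentredStep K v₀ μ₀) (h₁ : IsCentredStep K v₁ μ₁)
    (ha : a ∈ Icc (0 : ℝ) 1) :
    IsCentredStep K ((1 - a) * v₀ + a * v₁)
      (ENNReal.ofReal (1 - a) • μ₀ + ENNReal.ofReal a • μ₁) := by
  have := h₀.prob
  have := h₁.prob
  have ha' : 0 ≤ 1 - a := sub_nonneg.2 ha.2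
  have hintegral : ∀ f : ℝ → ℝ, Integrable f μ₀ → Integrable f μ₁ →
      ∫ z, f z ∂(ENNReal.ofReal (1 - a) • μ₀ + ENNReal.ofReal a • μ₁)
        = (1 - a) * ∫ z, f z ∂μ₀ + a * ∫ z, f z ∂μ₁ := by
    intro f hf₀ hf₁
    rw [integral_add_measure (hf₀.smul_measure ENNReal.ofReal_ne_top)
      (hf₁.smul_measure ENNReal.ofReal_ne_top), integral_smul_measure, integral_smul_measure,
      ENNReal.toReal_ofReal ha.1, ENNReal.toReal_ofReal ha', smul_eq_mul, smul_eq_mul]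
  refine ⟨⟨?_⟩, ?_, ?_, ?_⟩
  · simp [← ENNReal.ofReal_add ha' ha.1]
  · rw [ae_add_measure_iff]
    exact ⟨Measure.ae_smul_measure h₀.bounded _, Measure.ae_smul_measure h₁.bounded _⟩
  · rw [hintegral _ h₀.integrable_id h₁.integrable_id, h₀.mean, h₁.mean, mul_zero, mul_zero,
      add_zero]
  · rw [hintegral _ (h₀.integrable_pow 2) (h₁.integrable_pow 2), h₀.var, h₁.var]

lemma integral_quadratic (hν : IsCentredStep K v ν) (a b c : ℝ) :
    Integrable (fun z => a + b * z + c * z ^ 2) ν ∧ ∫ z, a + b * z + c * z ^ 2 ∂ν = a + c * v := by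
  have := hν.prob
  have hlin : Integrable (fun z => a + b * z) ν :=
    (integrable_const a).add (hν.integrable_id.const_mul b)
  have hquad : Integrable (fun z => c * z ^ 2) ν := (hν.integrable_pow 2).const_mul c
  refine ⟨hlin.add hquad, ?_⟩
  rw [integral_add hlin hquad, integral_add (integrable_const a) (hν.integrable_id.const_mul b),
    integral_const_mul, integral_const_mul, hν.mean, hν.var]
  simp

lemma lintegral_ofReal_le (hν : IsCentredStep K v ν) {g g' g'' : ℝ → ℝ} {C : ℝ≥0}
    (hg : ∀ z, HasDerivAt g (g' z) z) (hg' : ∀ z, HasDerivAt g' (g'' z) z)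
    (hlip : LipschitzWith C g'') (hpos : ∀ z, 0 ≤ g z) (x r : ℝ) :
    ∫⁻ z, ENNReal.ofReal (g (x + r * z)) ∂ν
      ≤ ENNReal.ofReal (g x + C * (|r| * K) ^ 3 + g'' x / 2 * r ^ 2 * v) := by
  have hle : ∀ᵐ z ∂ν, g (x + r * z)
      ≤ g x + C * (|r| * K) ^ 3 + g' x * r * z + g'' x / 2 * r ^ 2 * z ^ 2 := by
    filter_upwards [hν.bounded] with z hz
    have htaylor := (abs_le.1 (abs_taylor_two_le hg hg' hlip x (r * z))).2
    have hcube : C * |r * z| ^ 3 ≤ C * (|r| * K) ^ 3 := by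
      rw [abs_mul]
      gcongr
    linarith
  obtain ⟨hint, hvalue⟩ :=
    hν.integral_quadratic (g x + C * (|r| * K) ^ 3) (g' x * r) (g'' x / 2 * r ^ 2)
  rw [← hvalue, ofReal_integral_eq_lintegral_ofReal hint
    (hle.mono fun z hz => (hpos _).trans hz)]
  exact lintegral_mono_ae (hle.mono fun z hz => ENNReal.ofReal_le_ofReal hz)

end IsCentredStep

lemma alphaDelta_mem_Icc {β δ x : ℝ} (hβ : β ∈ Ioo (0 : ℝ) 1) (hδ : 0 < δ) (hx : x ∈ Icc 0 δ) :
    alphaDelta β δ x ∈ Icc (0 : ℝ) 1 := by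
  have hy := linear_interpolation_mem_Icc hβ.2.le hδ hx
  have hden : 0 < 1 - β ^ 2 := sub_pos.2 (pow_lt_one₀ hβ.1.le hβ.2 two_ne_zero)
  have hlow := pow_le_pow_left₀ hβ.1.le hy.1 2
  have hhigh := pow_le_one₀ (n := 2) (hβ.1.le.trans hy.1) hy.2
  exact ⟨div_nonneg (sub_nonneg.2 hlow) hden.le, (div_le_one hden).2 (by linarith)⟩

lemma isCentredStep_stepMeasure {β δ K sqn : ℝ} {μ0 μ1 : Measure ℝ} (hβ : β ∈ Ioo (0 : ℝ) 1)
    (hδ : 0 < δ) (hsqn : 0 < sqn) (h₀ : IsCentredStep K (β ^ 2) μ0) (h₁ : IsCentredStep K 1 μ1)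
    (s : ℝ) :
    IsCentredStep K (stepVar β δ (s / sqn)) (stepMeasure μ0 μ1 β δ sqn s) := by
  unfold stepMeasure stepVar
  simp only [div_le_iff₀ hsqn, lt_div_iff₀ hsqn, zero_mul]
  split_ifs with hs hsδ
  · exact h₁
  · exact h₀
  · have hx : s / sqn ∈ Icc 0 δ :=
      ⟨div_nonneg (not_le.1 hs).le hsqn.le, (div_le_iff₀ hsqn).2 (not_lt.1 hsδ)⟩
    have hden : 1 - β ^ 2 ≠ 0 := (sub_pos.2 (pow_lt_one₀ hβ.1.le hβ.2 two_ne_zero)).ne'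
    convert h₀.mixture h₁ (alphaDelta_mem_Icc hβ hδ hx) using 1
    rw [alphaDelta]
    field_simp
    ring

lemma measurable_map_stepMeasure (μ0 μ1 : Measure ℝ) [SFinite μ0] [SFinite μ1] (β δ sqn : ℝ) :
    Measurable fun s => (stepMeasure μ0 μ1 β δ sqn s).map fun z => s + z := by
  refine Measure.measurable_of_measurable_coe _ fun B hB => ?_
  have hshift : ∀ (μ : Measure ℝ) [SFinite μ], Measurable fun s : ℝ => μ ((fun z => s + z) ⁻¹' B) :=
    fun _ _ => measurable_measure_prodMk_left (measurable_add hB)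
  have hα : Measurable fun s : ℝ => alphaDelta β δ (s / sqn) := by
    unfold alphaDelta
    fun_prop
  have heq : (fun s => (stepMeasure μ0 μ1 β δ sqn s).map (fun z => s + z) B) = fun s =>
      if s ≤ 0 then μ1 ((fun z => s + z) ⁻¹' B)
      else if δ * sqn < s then μ0 ((fun z => s + z) ⁻¹' B)
      else ENNReal.ofReal (1 - alphaDelta β δ (s / sqn)) * μ0 ((fun z => s + z) ⁻¹' B) +
        ENNReal.ofReal (alphaDelta β δ (s / sqn)) * μ1 ((fun z => s + z) ⁻¹' B) := by
    funext s
    rw [Measure.map_apply (by fun_prop) hB, stepMeasure]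
    split_ifs <;> simp
  rw [heq]
  exact Measurable.ite measurableSet_Iic (hshift μ1) <|
    Measurable.ite measurableSet_Ioi (hshift μ0) <|
      ((measurable_const.sub hα).ennreal_ofReal.mul (hshift μ0)).add
        (hα.ennreal_ofReal.mul (hshift μ1))

/-! ### Supermartingales along the walk -/

section Walk

variable {β δ ε K : ℝ} {μ0 μ1 : Measure ℝ} {n : ℕ}

lemma lintegral_walkLaw_succ [SFinite μ0] [SFinite μ1] (k : ℕ) {g : ℝ → ℝ≥0∞} (hg : Measurable g) :
    ∫⁻ s, g s ∂walkLaw μ0 μ1 β δ ε n (k + 1)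
      = ∫⁻ s, ∫⁻ z, g (s + z) ∂stepMeasure μ0 μ1 β δ (√n) s ∂walkLaw μ0 μ1 β δ ε n k := by
  rw [walkLaw, Measure.lintegral_bind (measurable_map_stepMeasure μ0 μ1 β δ _).aemeasurable
    hg.aemeasurable]
  exact lintegral_congr fun s => lintegral_map hg (by fun_prop)

lemma isProbabilityMeasure_walkLaw [SFinite μ0] [SFinite μ1]
    (hstep : ∀ s, IsProbabilityMeasure (stepMeasure μ0 μ1 β δ (√n) s)) (k : ℕ) :
    IsProbabilityMeasure (walkLaw μ0 μ1 β δ ε n k) := by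
  induction k with
  | zero => exact Measure.dirac.isProbabilityMeasure
  | succ k _ =>
    refine isProbabilityMeasure_bind (measurable_map_stepMeasure μ0 μ1 β δ _).aemeasurable ?_
    exact Eventually.of_forall fun s => Measure.isProbabilityMeasure_map (by fun_prop)

lemma lintegral_walkLaw_le [SFinite μ0] [SFinite μ1]
    (hprob : ∀ s, IsProbabilityMeasure (stepMeasure μ0 μ1 β δ (√n) s)) {g : ℕ → ℝ → ℝ≥0∞}
    {c : ℝ≥0∞} {m : ℕ} (hg : ∀ k ≤ m, Measurable (g k))
    (hstep : ∀ k < m, ∀ s, ∫⁻ z, g (k + 1) (s + z) ∂stepMeasure μ0 μ1 β δ (√n) s ≤ g k s + c) :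
    ∫⁻ s, g m s ∂walkLaw μ0 μ1 β δ ε n m ≤ g 0 (sEps β ε * √n) + m * c := by
  induction m with
  | zero => simp [walkLaw]
  | succ m ih =>
    have := isProbabilityMeasure_walkLaw (ε := ε) hprob m
    calc ∫⁻ s, g (m + 1) s ∂walkLaw μ0 μ1 β δ ε n (m + 1)
        = ∫⁻ s, ∫⁻ z, g (m + 1) (s + z) ∂stepMeasure μ0 μ1 β δ (√n) s
            ∂walkLaw μ0 μ1 β δ ε n m := lintegral_walkLaw_succ m (hg _ le_rfl)
      _ ≤ ∫⁻ s, (g m s + c) ∂walkLaw μ0 μ1 β δ ε n m :=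
          lintegral_mono (hstep m m.lt_succ_self)
      _ = ∫⁻ s, g m s ∂walkLaw μ0 μ1 β δ ε n m + c := by
          rw [lintegral_add_right _ measurable_const, lintegral_const, measure_univ, mul_one]
      _ ≤ g 0 (sEps β ε * √n) + m * c + c := by
          gcongr
          exact ih (fun k hk => hg k (hk.trans m.le_succ))
            fun k hk => hstep k (hk.trans m.lt_succ_self)
      _ = g 0 (sEps β ε * √n) + (m + 1 : ℕ) * c := by
          push_cast
          ring

namespace IsTestFunction

variable {I : Set ℝ} {V Vx Vxx Vt : ℝ → ℝ → ℝ}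

lemma exists_abs_time_increment_le (hV : IsTestFunction I V Vx Vxx Vt) (hI : I.OrdConnected) :
    ∃ C : ℝ≥0, ∀ s ∈ I, ∀ t ∈ I, ∀ x, |V t x - V s x - Vt s x * (t - s)| ≤ C * (t - s) ^ 2 := by
  obtain ⟨C, hC⟩ := hV.lipschitz_time
  refine ⟨C, fun s hs t ht x => ?_⟩
  have hsub : uIcc s t ⊆ I := hI.uIcc_subset hs ht
  have hlin := abs_sub_linearization_le (f := fun r => V r x) (f' := fun r => Vt r x)
    (B := C * |t - s|) (fun r hr => hV.hasDerivAt_time r (hsub hr) x) fun r hr =>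
      ((hC x (mem_univ x)).dist_le_mul r (hsub hr) s hs).trans
        (mul_le_mul_of_nonneg_left (abs_sub_left_of_mem_uIcc hr) C.2)
  rwa [mul_assoc, ← sq, sq_abs] at hlin

lemma exists_lintegral_step_le (hV : IsTestFunction I V Vx Vxx Vt) (hI : I.OrdConnected)
    (hpos : ∀ t ∈ I, ∀ x, 0 ≤ V t x) (K : ℝ) :
    ∃ M : ℝ, 0 ≤ M ∧ ∀ {v e t h x : ℝ} {ν : Measure ℝ}, IsCentredStep K v ν → h ∈ Icc 0 1 →
      t ∈ I → t + h ∈ I → v / 2 * Vxx t x ≤ Vt t x + e →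
      ∫⁻ z, ENNReal.ofReal (V t (x + √h * z)) ∂ν
        ≤ ENNReal.ofReal (V (t + h) x + h * (e + M * √h)) := by
  obtain ⟨C, hC⟩ := hV.lipschitz_space
  obtain ⟨D, hD⟩ := hV.exists_abs_time_increment_le hI
  refine ⟨C * |K| ^ 3 + D, by positivity, fun {v e t h x ν} hν hh ht hth hsup => ?_⟩
  refine (hν.lintegral_ofReal_le (hV.hasDerivAt_space t ht) (hV.hasDerivAt_space_two t ht)
    (lipschitzOnWith_univ.1 (hC t ht)) (hpos t ht) x √h).trans (ENNReal.ofReal_le_ofReal ?_)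
  have hsq : √h ^ 2 = h := sq_sqrt hh.1
  have htime : V t x + h * Vt t x ≤ V (t + h) x + D * h ^ 2 := by
    have hlow := (abs_le.1 (hD t ht (t + h) hth x)).1
    rw [add_sub_cancel_left] at hlow
    linarith
  have hspace : C * (|√h| * K) ^ 3 ≤ C * |K| ^ 3 * (h * √h) := by
    have hK : K ^ 3 ≤ |K| ^ 3 := (le_abs_self _).trans_eq (abs_pow K 3)
    calc C * (|√h| * K) ^ 3 = C * K ^ 3 * (√h ^ 2 * √h) := by
          rw [abs_of_nonneg (sqrt_nonneg h)]
          ring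
      _ = C * K ^ 3 * (h * √h) := by rw [hsq]
      _ ≤ C * |K| ^ 3 * (h * √h) := by
          have := hh.1
          gcongr
  have hsmall : D * h ^ 2 ≤ D * (h * √h) := by
    have := hh.1
    rw [sq]
    gcongr
    exact le_sqrt_of_sq_le (by nlinarith [hh.2])
  have hdrift := mul_le_mul_of_nonneg_left hsup hh.1
  rw [hsq]
  linarith

lemma exists_lintegral_walkLaw_le {η e : ℝ} (hV : IsTestFunction (Icc η (η + 1)) V Vx Vxx Vt)
    (hpos : ∀ t ∈ Icc η (η + 1), ∀ x, 0 ≤ V t x) (hβ : β ∈ Ioo (0 : ℝ) 1) (hδ : 0 < δ)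
    (h₀ : IsCentredStep K (β ^ 2) μ0) (h₁ : IsCentredStep K 1 μ1) (he : 0 ≤ e)
    (hsup : ∀ t ∈ Icc η (η + 1), ∀ x, stepVar β δ x / 2 * Vxx t x ≤ Vt t x + e) :
    ∃ M : ℝ, 0 ≤ M ∧ ∀ n : ℕ, 0 < n →
      ∫⁻ s, ENNReal.ofReal (V η (s / √n)) ∂walkLaw μ0 μ1 β δ ε n n
        ≤ ENNReal.ofReal (V (η + 1) (sEps β ε) + (e + M / √n)) := by
  obtain ⟨M, hM0, hM⟩ := hV.exists_lintegral_step_le ordConnected_Icc hpos K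
  refine ⟨M, hM0, fun n hn => ?_⟩
  have hn' : (0 : ℝ) < n := Nat.cast_pos.2 hn
  have hsqn : 0 < √(n : ℝ) := sqrt_pos.2 hn'
  have := h₀.prob
  have := h₁.prob
  have hν := isCentredStep_stepMeasure hβ hδ hsqn h₀ h₁
  have htime : ∀ k ≤ n, η + (1 - k / n : ℝ) ∈ Icc η (η + 1) := fun k hk => by
    have hk1 : (k / n : ℝ) ≤ 1 := (div_le_one hn').2 (Nat.cast_le.2 hk)
    have hk0 : (0 : ℝ) ≤ k / n := by positivity
    constructor <;> linarith
  have hsum := lintegral_walkLaw_le (ε := ε) (m := n) (fun s => (hν s).prob)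
    (g := fun k s => ENNReal.ofReal (V (η + (1 - k / n)) (s / √n)))
    (c := ENNReal.ofReal (1 / n * (e + M * √(1 / n))))
    (fun k hk => ((hV.continuous (htime k hk)).measurable.comp
      (measurable_id.div_const _)).ennreal_ofReal) fun k hk s => by
    have hshift : η + (1 - (k + 1 : ℕ) / n : ℝ) + 1 / n = η + (1 - k / n) := by
      push_cast
      ring
    have hstep := hM (x := s / √n) (hν s) (h := 1 / n) ⟨by positivity,
      (div_le_one hn').2 (Nat.one_le_cast.2 hn)⟩ (htime (k + 1) hk)
      (hshift ▸ htime k hk.le) (hsup _ (htime (k + 1) hk) _)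
    rw [hshift] at hstep
    refine le_trans (lintegral_mono fun z => ?_) (hstep.trans ENNReal.ofReal_add_le)
    rw [sqrt_div zero_le_one, sqrt_one, add_div, one_div_mul_eq_div]
  simp only [Nat.cast_zero, zero_div, sub_zero, div_self hn'.ne', sub_self, add_zero,
    mul_div_cancel_right₀ _ hsqn.ne'] at hsum
  refine hsum.trans_eq ?_
  rw [← ENNReal.ofReal_natCast, ← ENNReal.ofReal_mul hn'.le, ← ENNReal.ofReal_add
    (hpos _ (right_mem_Icc.2 (by linarith)) _) (by positivity), sqrt_div zero_le_one, sqrt_one]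
  congr 2
  field_simp

lemma exists_walkLaw_Iic_le {η e : ℝ} (hV : IsTestFunction (Icc η (η + 1)) V Vx Vxx Vt)
    (hpos : ∀ t ∈ Icc η (η + 1), ∀ x, 0 ≤ V t x) (hone : ∀ x ≤ 0, 1 ≤ V η x)
    (hβ : β ∈ Ioo (0 : ℝ) 1) (hδ : 0 < δ) (h₀ : IsCentredStep K (β ^ 2) μ0)
    (h₁ : IsCentredStep K 1 μ1) (he : 0 ≤ e)
    (hsup : ∀ t ∈ Icc η (η + 1), ∀ x, stepVar β δ x / 2 * Vxx t x ≤ Vt t x + e) (ε : ℝ) :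
    ∃ M : ℝ, ∀ n : ℕ, 0 < n →
      (walkLaw μ0 μ1 β δ ε n n (Iic 0)).toReal ≤ V (η + 1) (sEps β ε) + (e + M / √n) := by
  obtain ⟨M, hM0, hM⟩ := hV.exists_lintegral_walkLaw_le (ε := ε) hpos hβ hδ h₀ h₁ he hsup
  refine ⟨M, fun n hn => ENNReal.toReal_le_of_le_ofReal
    (add_nonneg (hpos _ (right_mem_Icc.2 (by linarith)) _) (by positivity)) ?_⟩
  rw [← lintegral_indicator_one measurableSet_Iic]
  refine (lintegral_mono (indicator_le fun s hs => ?_)).trans (hM n hn)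
  exact ENNReal.one_le_ofReal.2 (hone _ (div_nonpos_of_nonpos_of_nonneg hs (sqrt_nonneg _)))

end IsTestFunction

end Walk

/-! ### The barrier -/

section Barrier

variable {β τ η R x : ℝ}

lemma gaussMonomial_zero_supersolution {p v w t : ℝ} (hw : 0 < w) (hp : p * w ≤ v / 2)
    (hv : v ≤ w) (ht : 0 ≤ t) (x : ℝ) :
    v / 2 * (-w⁻¹ * gaussMonomial 0 (p + 1) w t x + w⁻¹ ^ 2 * gaussMonomial 2 (p + 1 + 1) w t x)
      ≤ -p * gaussMonomial 0 (p + 1) w t x + (2 * w)⁻¹ * gaussMonomial 2 (p + 1 + 1) w t x := by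
  have hzero := gaussMonomial_nonneg Even.zero ht (p + 1) w x
  have htwo := gaussMonomial_nonneg even_two ht (p + 1 + 1) w x
  have hdiff : 0 ≤ (v / 2 - p * w) / w * gaussMonomial 0 (p + 1) w t x
      + (w - v) / (2 * w ^ 2) * gaussMonomial 2 (p + 1 + 1) w t x :=
    add_nonneg (mul_nonneg (div_nonneg (sub_nonneg.2 hp) hw.le) hzero)
      (mul_nonneg (div_nonneg (sub_nonneg.2 hv) (by positivity)) htwo)
  rw [← sub_nonneg]
  convert hdiff using 1
  field_simp
  ring

lemma one_le_mul_gaussMonomial_zero (hη : 0 < η) (hx : x ^ 2 ≤ R ^ 2 * η) (p : ℝ) :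
    1 ≤ exp (R ^ 2 / 2) * η ^ p * gaussMonomial 0 p 1 η x := by
  have hexponent : 0 ≤ R ^ 2 / 2 + -(x ^ 2 / (2 * 1 * η)) := by
    rw [mul_one, ← sub_eq_add_neg, sub_nonneg, div_le_div_iff₀ (by positivity) two_pos]
    linarith
  calc (1 : ℝ) ≤ exp (R ^ 2 / 2 + -(x ^ 2 / (2 * 1 * η))) := one_le_exp_iff.2 hexponent
    _ = exp (R ^ 2 / 2) * exp (-(x ^ 2 / (2 * 1 * η))) * (η ^ p * η ^ (-p)) := by
        rw [exp_add, ← rpow_add hη, add_neg_cancel, rpow_zero, mul_one (_ * _)]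
    _ = exp (R ^ 2 / 2) * η ^ p * gaussMonomial 0 p 1 η x := by
        rw [gaussMonomial]
        ring

lemma one_le_oscProb_add_layer (hβ : 0 < β) (hη : 0 < η) (hR : 1 - τ ≤ gcdf R) (hτ : 0 ≤ τ)
    (hx : x ≤ 0) (p : ℝ) :
    1 ≤ oscProb β η x + exp (R ^ 2 / 2) * η ^ p * gaussMonomial 0 p 1 η x + 2 * τ := by
  have hlayer := gaussMonomial_nonneg Even.zero hη.le p 1 x
  rcases le_total R (-(x / √η)) with hfar | hnear
  · have hgcdf := hR.trans (strictMono_gcdf.monotone hfar)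
    have hosc := one_sub_le_oscProb hβ hx η
    have : 0 ≤ exp (R ^ 2 / 2) * η ^ p * gaussMonomial 0 p 1 η x := by positivity
    linarith
  · have hsq : x ^ 2 ≤ R ^ 2 * η := by
      have hle := pow_le_pow_left₀
        (neg_nonneg.2 (div_nonpos_of_nonpos_of_nonneg hx (sqrt_nonneg η))) hnear 2
      rwa [neg_sq, div_pow, sq_sqrt hη.le, div_le_iff₀ hη] at hle
    linarith [one_le_mul_gaussMonomial_zero hη hsq p, oscProb_nonneg hβ η x]

lemma exists_small_time {ε p : ℝ} (hβ : β ∈ Ioo (0 : ℝ) 1) (hε : ε ∈ Ioo (0 : ℝ) 1) (hp : 0 < p)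
    (hτ : 0 < τ) (C : ℝ) :
    ∃ η > 0, oscProb β (η + 1) (sEps β ε) ≤ ε + τ ∧ C * η ^ p ≤ τ := by
  have hosc : Tendsto (fun η => oscProb β (η + 1) (sEps β ε)) (nhdsWithin 0 (Ioi 0)) (nhds ε) := by
    have hcont := ((isTestFunction_oscProb one_pos hβ.1 1).hasDerivAt_time 1
      (left_mem_Icc.2 le_rfl) (sEps β ε)).continuousAt.tendsto
    rw [oscProb_one_sEps hβ hε] at hcont
    refine hcont.comp (Tendsto.mono_left ?_ nhdsWithin_le_nhds)
    exact (continuous_add_const (1 : ℝ)).tendsto' 0 1 (zero_add 1)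
  have hlayer : Tendsto (fun η : ℝ => C * η ^ p) (nhdsWithin 0 (Ioi 0)) (nhds 0) := by
    refine (((continuous_rpow_const hp.le).const_mul C).tendsto' 0 0 ?_).mono_left
      nhdsWithin_le_nhds
    rw [zero_rpow hp.ne', mul_zero]
  obtain ⟨η, ⟨hηosc, hηlayer⟩, hη⟩ :=
    (((hosc.eventually_lt_const (lt_add_of_pos_right ε hτ)).and
      (hlayer.eventually_lt_const hτ)).and self_mem_nhdsWithin).exists
  exact ⟨η, hη, hηosc.le, hηlayer.le⟩

lemma exists_barrier {ε : ℝ} (hβ : β ∈ Ioo (0 : ℝ) 1) (hε : ε ∈ Ioo (0 : ℝ) 1) (hτ : 0 < τ) :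
    ∃ (η : ℝ) (V Vx Vxx Vt : ℝ → ℝ → ℝ), IsTestFunction (Icc η (η + 1)) V Vx Vxx Vt ∧
      (∀ t ∈ Icc η (η + 1), ∀ x, 0 ≤ V t x) ∧ (∀ x ≤ 0, 1 ≤ V η x) ∧
      V (η + 1) (sEps β ε) ≤ ε + τ ∧
      ∀ e > 0, ∃ δ ∈ Ioo (0 : ℝ) 1, ∀ t ∈ Icc η (η + 1), ∀ x,
        stepVar β δ x / 2 * Vxx t x ≤ Vt t x + e := by
  have hτ4 : 0 < τ / 4 := by positivity
  have hp : 0 < β ^ 2 / 2 := half_pos (pow_pos hβ.1 2)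
  obtain ⟨R, hR⟩ := (tendsto_gcdf_atTop.eventually_const_le (sub_lt_self 1 hτ4)).exists
  obtain ⟨η, hη, hosc, hc⟩ := exists_small_time hβ hε hp hτ4 (exp (R ^ 2 / 2))
  set c := exp (R ^ 2 / 2) * η ^ (β ^ 2 / 2)
  have hc0 : 0 ≤ c := by positivity
  have htest := isTestFunction_oscProb hη hβ.1 (η + 1)
  refine ⟨η, _, _, _, _, (htest.add
    ((isTestFunction_gaussMonomial_zero hη one_pos (η + 1) (β ^ 2 / 2)).const_mul c)).add_const
      (2 * (τ / 4)), fun t ht x => ?_, fun x hx => one_le_oscProb_add_layer hβ.1 hη hR hτ4.le hx _,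
      ?_, fun e he => ?_⟩
  · have := oscProb_nonneg hβ.1 t x
    have := gaussMonomial_nonneg Even.zero (hη.le.trans ht.1) (β ^ 2 / 2) 1 x
    positivity
  · have hlayer := mul_le_of_le_one_right hc0 (gaussMonomial_zero_le_one hp.le zero_le_one
      (le_add_of_nonneg_left hη.le : 1 ≤ η + 1) (sEps β ε))
    linarith
  · obtain ⟨δ, hδ, hstep⟩ := exists_stepVar_mul_le hβ htest.lipschitz_space
      (fun t _ => oscProbXX_zero_right β t) he
    refine ⟨δ, hδ, fun t ht x => ?_⟩
    have hv := stepVar_mem_Icc hβ hδ.1 x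
    have hp' : β ^ 2 / 2 * 1 ≤ stepVar β δ x / 2 := by linarith [hv.1]
    have hlayer := mul_le_mul_of_nonneg_left
      (gaussMonomial_zero_supersolution one_pos hp' hv.2 (hη.le.trans ht.1) x) hc0
    linarith [hstep t ht x]

end Barrier

/-- Proposition 1: `P(S_n^{δ₀,ε,n}/√n ≤ 0) ≤ ε + κ` for suitable `δ₀` and all
large `n`. -/
theorem controlled_walk_ruin
    (β : ℝ) (hβ : β ∈ Set.Ioo (0 : ℝ) 1)
    (μ0 μ1 : Measure ℝ)
    (h0 : IsProbabilityMeasure μ0) (h1 : IsProbabilityMeasure μ1)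
    (hb0 : ∃ K : ℝ, ∀ᵐ z ∂μ0, |z| ≤ K) (hb1 : ∃ K : ℝ, ∀ᵐ z ∂μ1, |z| ≤ K)
    (hm0 : ∫ z, z ∂μ0 = 0) (hm1 : ∫ z, z ∂μ1 = 0)
    (hv0 : ∫ z, z ^ 2 ∂μ0 = β ^ 2) (hv1 : ∫ z, z ^ 2 ∂μ1 = 1)
    (ε : ℝ) (hε : ε ∈ Set.Ioo (0 : ℝ) 1) :
    ∀ κ : ℝ, 0 < κ → ∃ δ₀ : ℝ, δ₀ ∈ Set.Ioo (0 : ℝ) 1 ∧ ∃ n₀ : ℕ, 0 < n₀ ∧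
      ∀ n : ℕ, n₀ ≤ n →
        (walkLaw μ0 μ1 β δ₀ ε n n (Set.Iic 0)).toReal ≤ ε + κ := by
  intro κ hκ
  obtain ⟨K₀, hK₀⟩ := hb0
  obtain ⟨K₁, hK₁⟩ := hb1
  have hs₀ : IsCentredStep (max K₀ K₁) (β ^ 2) μ0 :=
    ⟨h0, hK₀.mono fun z hz => hz.trans (le_max_left _ _), hm0, hv0⟩
  have hs₁ : IsCentredStep (max K₀ K₁) 1 μ1 :=
    ⟨h1, hK₁.mono fun z hz => hz.trans (le_max_right _ _), hm1, hv1⟩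
  have hκ3 : 0 < κ / 3 := by positivity
  obtain ⟨η, V, Vx, Vxx, Vt, hV, hpos, hone, hstart, hsuper⟩ := exists_barrier hβ hε hκ3
  obtain ⟨δ, hδ, hδsuper⟩ := hsuper (κ / 3) hκ3
  obtain ⟨M, hM⟩ := hV.exists_walkLaw_Iic_le hpos hone hβ hδ.1 hs₀ hs₁ hκ3.le hδsuper ε
  have hremainder : Tendsto (fun n : ℕ => M / √(n : ℝ)) atTop (nhds 0) :=
    (tendsto_sqrt_atTop.comp tendsto_natCast_atTop_atTop).const_div_atTop M
  obtain ⟨N, hN⟩ := eventually_atTop.1 (hremainder.eventually_lt_const hκ3)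
  refine ⟨δ, hδ, max 1 N, by positivity, fun n hn => ?_⟩
  have hruin := hM n (one_pos.trans_le ((le_max_left 1 N).trans hn))
  have hsmall := hN n ((le_max_right 1 N).trans hn)
  linarith

end Paper
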